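/- (WODP implies polynomial WODP) Let X be a real Banach space with the weak operator Daugavet property. Then X has the polynomial WODP: for every x₁, …, x_n ∈ B_X, every ε > 0 and δ > 0, every x' ∈ B_X, and every continuous scalar polynomial p on X with sup_{‖z‖≤1} |p(z)| = 1, there exist y ∈ OF(x₁,…,x_n; x', ε) and ω ∈ {−1, 1} such that ω·p(y) > 1 − δ. -/

import Mathlib

/-!
The key point is a path argument. Fix `z` in the unit ball where `ω * p` almost attains its
supremum, put `t = 1 / N` and start at `z`. At each step a portion `t • z` of the current point `w`
is replaced by `t • y`, where `y` is supplied by the WODP for the slice of the ball defined by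
the derivative of `ω * p` at `w`. Since `y` almost maximises that derivative on the ball, the
first-order change of `ω * p` is bounded below by `-O(t ^ 2)`, and so is the second-order
remainder (`diag_quadraticApprox`, `IsScalarPoly.quadraticApprox`). After `N` steps the total loss
is `O(1 / N)` and the point is the average of the chosen vectors `y₁, …, y_N`.

This average stays in `OF` because the operators compose: the `k`-th operator is required to
almost fix the `xs i`, the target `x'` and the partial sum already built, and to send `y_k` close
to `x'`. Precomposing the earlier operators with it gives one operator that almost fixes the `xs i`
and sends the average close to `x'` (`exists_path`).
-/

/-- The set `OF(x₁,…,x_n; x', ε)`: points `x` of the closed unit ball for which there is an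
operator `T` with `‖T‖ ≤ 1` almost fixing each `x_i` and sending `x` close to `x'`. -/
def OF {X : Type*} [NormedAddCommGroup X] [NormedSpace ℝ X]
    {n : ℕ} (xs : Fin n → X) (x' : X) (ε : ℝ) : Set X :=
  {x | ‖x‖ ≤ 1 ∧ ∃ T : X →L[ℝ] X, ‖T‖ ≤ 1 ∧
    (∀ i, ‖T (xs i) - xs i‖ < ε) ∧ ‖T x - x'‖ < ε}

/-- A continuous scalar polynomial on a real normed space `X`: a function of the form
`p x = c + ∑_{n=1}^{N} F n (x, …, x)` where each `F n` is a continuous `n`-linear form. -/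
def IsScalarPoly {X : Type*} [NormedAddCommGroup X] [NormedSpace ℝ X] (p : X → ℝ) : Prop :=
  ∃ (N : ℕ) (c : ℝ) (F : (n : ℕ) → ContinuousMultilinearMap ℝ (fun _ : Fin n => X) ℝ),
    ∀ x : X, p x = c + ∑ n ∈ Finset.Icc 1 N, F n (fun _ => x)

/-- At each point `w` of the closed unit ball, `q` has a first-order approximation on the ball
whose linear part has norm at most `C` and whose remainder is at most `C * ‖v - w‖ ^ 2`, with the
same `C` for all `w`. -/
def QuadraticApprox {X : Type*} [NormedAddCommGroup X] [NormedSpace ℝ X] (q : X → ℝ) (C : ℝ) :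
    Prop :=
  ∀ w : X, ‖w‖ ≤ 1 → ∃ L : X →L[ℝ] ℝ, ‖L‖ ≤ C ∧
    ∀ v : X, ‖v‖ ≤ 1 → |q v - q w - L (v - w)| ≤ C * ‖v - w‖ ^ 2

section

variable {X : Type*} [NormedAddCommGroup X] [NormedSpace ℝ X]

lemma QuadraticApprox.add {p q : X → ℝ} {C D : ℝ} (hp : QuadraticApprox p C)
    (hq : QuadraticApprox q D) : QuadraticApprox (fun x => p x + q x) (C + D) := by
  intro w hw
  obtain ⟨L, hL, hL'⟩ := hp w hw
  obtain ⟨M, hM, hM'⟩ := hq w hw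
  refine ⟨L + M, (norm_add_le _ _).trans (add_le_add hL hM), fun v hv => ?_⟩
  have h1 := abs_le.1 (hL' v hv)
  have h2 := abs_le.1 (hM' v hv)
  simp only [add_apply]
  rw [abs_le]
  constructor <;> nlinarith [h1.1, h1.2, h2.1, h2.2]

lemma QuadraticApprox.const (c : ℝ) : QuadraticApprox (fun _ : X => c) 0 := by
  intro w _
  exact ⟨0, by simp, fun v _ => by simp⟩

lemma QuadraticApprox.neg {p : X → ℝ} {C : ℝ} (hp : QuadraticApprox p C) :
    QuadraticApprox (fun x => -p x) C := by
  intro w hw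
  obtain ⟨L, hL, hL'⟩ := hp w hw
  refine ⟨-L, by simpa using hL, fun v hv => ?_⟩
  have h1 := abs_le.1 (hL' v hv)
  simp only [neg_apply]
  rw [abs_le]
  constructor <;> linarith [h1.1, h1.2]

/-- The derivative of `x ↦ F (x, …, x)` is `h ↦ ∑ i, F (x, …, h, …, x)`, which is bounded and
Lipschitz in `x` on the ball; the mean value inequality on the segment `[w, v]` then bounds the
remainder. -/
lemma diag_quadraticApprox {n : ℕ} (F : ContinuousMultilinearMap ℝ (fun _ : Fin n => X) ℝ) :
    ∃ C, QuadraticApprox (fun x => F (fun _ => x)) C := by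
  let J : X →L[ℝ] (Fin n → X) := ContinuousLinearMap.pi fun _ => ContinuousLinearMap.id ℝ X
  let D : X → X →L[ℝ] ℝ := fun x => (F.linearDeriv (fun _ => x)).comp J
  have hD : ∀ x, HasFDerivAt (fun x => F (fun _ => x)) (D x) x := fun x =>
    (F.hasFDerivAt (J x)).comp x J.hasFDerivAt
  have hDa : ∀ x h, D x h = ∑ i, F (Function.update (fun _ => x) i h) := fun x h =>
    F.linearDeriv_apply _ _
  have hup : ∀ (x h : X) (i : Fin n), ‖x‖ ≤ 1 → ‖h‖ = 1 →
      ‖Function.update (fun _ => x) i h‖ ≤ 1 := by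
    intro x h i hx hh
    refine (pi_norm_le_iff_of_nonneg zero_le_one).2 fun j => ?_
    by_cases hj : j = i
    · subst hj; simp [hh]
    · simp [hj, hx]
  have hbd : ∀ x : X, ‖x‖ ≤ 1 → ‖D x‖ ≤ n * ‖F‖ := by
    intro x hx
    refine ContinuousLinearMap.opNorm_le_of_unit_norm (by positivity) fun h hh => ?_
    rw [hDa]
    refine (norm_sum_le_of_le _ (fun i _ => ?_)).trans
      (b := ∑ i : Fin n, ‖F‖) (by simp)
    refine (F.le_opNorm _).trans ?_
    refine mul_le_of_le_one_right (norm_nonneg _) ?_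
    exact Finset.prod_le_one (fun _ _ => norm_nonneg _)
      fun j _ => (norm_le_pi_norm _ j).trans (hup x h i hx hh)
  have hlip : ∀ x w : X, ‖x‖ ≤ 1 → ‖w‖ ≤ 1 → ‖D x - D w‖ ≤ (n * (‖F‖ * n)) * ‖x - w‖ := by
    intro x w hx hw
    refine ContinuousLinearMap.opNorm_le_of_unit_norm (by positivity) fun h hh => ?_
    rw [sub_apply, hDa, hDa, ← Finset.sum_sub_distrib]
    refine (norm_sum_le_of_le _ (fun i _ => ?_)).trans
      (b := ∑ i : Fin n, (‖F‖ * n) * ‖x - w‖) (by simp [mul_assoc])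
    refine (F.norm_image_sub_le _ _).trans ?_
    have h1 : ‖Function.update (fun _ => x) i h - Function.update (fun _ => w) i h‖
        ≤ ‖x - w‖ := by
      refine (pi_norm_le_iff_of_nonneg (norm_nonneg _)).2 fun j => ?_
      by_cases hj : j = i
      · subst hj; simp
      · simp [hj]
    have h2 : max ‖Function.update (fun _ => x) i h‖ ‖Function.update (fun _ => w) i h‖
        ^ (Fintype.card (Fin n) - 1) ≤ 1 :=
      pow_le_one₀ (le_max_of_le_left (norm_nonneg _))
        (max_le (hup x h i hx hh) (hup w h i hw hh))
    rw [Fintype.card_fin] at h2 ⊢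
    refine mul_le_mul ?_ h1 (norm_nonneg _) (by positivity)
    exact mul_le_of_le_one_right (by positivity) h2
  refine ⟨n * ‖F‖ + n * (‖F‖ * n), fun w hw => ⟨D w, (hbd w hw).trans ?_, fun v hv => ?_⟩⟩
  · have : 0 ≤ (n : ℝ) * (‖F‖ * n) := by positivity
    linarith
  · have hseg : ∀ x ∈ segment ℝ w v, ‖x‖ ≤ 1 ∧ ‖x - w‖ ≤ ‖v - w‖ := by
      intro x hx
      refine ⟨?_, norm_sub_le_of_mem_segment hx⟩
      have := (convex_closedBall (0 : X) 1).segment_subset (by simpa using hw)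
        (by simpa using hv) hx
      simpa using this
    have key := (convex_segment w v).norm_image_sub_le_of_norm_hasFDerivWithin_le'
      (f := fun x => F (fun _ => x)) (f' := D) (φ := D w)
      (C := (n * (‖F‖ * n)) * ‖v - w‖)
      (fun x _ => (hD x).hasFDerivWithinAt)
      (fun x hx => (hlip x w (hseg x hx).1 hw).trans
        (mul_le_mul_of_nonneg_left (hseg x hx).2 (by positivity)))
      (left_mem_segment ℝ w v) (right_mem_segment ℝ w v)
    rw [Real.norm_eq_abs] at key
    refine key.trans ?_
    have : 0 ≤ (n * ‖F‖) * ‖v - w‖ ^ 2 := by positivity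
    nlinarith

lemma IsScalarPoly.quadraticApprox {p : X → ℝ} (hp : IsScalarPoly p) :
    ∃ C, QuadraticApprox p C := by
  obtain ⟨N, c, F, h⟩ := hp
  have hs : ∀ s : Finset ℕ,
      ∃ C, QuadraticApprox (fun x => c + ∑ n ∈ s, F n (fun _ => x)) C := by
    intro s
    induction s using Finset.induction_on with
    | empty => exact ⟨0, by simpa using QuadraticApprox.const c⟩
    | insert a s ha ih =>
      obtain ⟨C, hC⟩ := ih
      obtain ⟨D, hD⟩ := diag_quadraticApprox (F a)
      refine ⟨D + C, ?_⟩
      convert hD.add hC using 2 with x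
      rw [Finset.sum_insert ha]
      ring
  rw [show p = _ from funext h]
  exact hs _

/-- The weak operator Daugavet property. -/
def WODP (X : Type*) [NormedAddCommGroup X] [NormedSpace ℝ X] : Prop :=
  ∀ (n : ℕ) (xs : Fin n → X), (∀ i, ‖xs i‖ ≤ 1) →
    ∀ ε > (0 : ℝ), ∀ (x' : X), ‖x'‖ ≤ 1 →
      ∀ (f : X →L[ℝ] ℝ), ‖f‖ = 1 → ∀ α > (0 : ℝ), ∃ x ∈ OF xs x' ε, f x > 1 - α

/-- A form of the WODP for functionals that are not normalised, and possibly zero. -/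
lemma WODP.exists_almost_max (hX : WODP X) {n : ℕ} {xs : Fin n → X} (hxs : ∀ i, ‖xs i‖ ≤ 1)
    {ε : ℝ} (hε : 0 < ε) {x' : X} (hx' : ‖x'‖ ≤ 1) (L : X →L[ℝ] ℝ) {C : ℝ} (hL : ‖L‖ ≤ C)
    {t : ℝ} (ht : 0 < t) {z : X} (hz : ‖z‖ ≤ 1) :
    ∃ y ∈ OF xs x' ε, L z - C * t ≤ L y := by
  have hC : 0 ≤ C := (norm_nonneg _).trans hL
  rcases eq_or_ne L 0 with rfl | hL0
  · rcases subsingleton_or_nontrivial X with hs | hs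
    · refine ⟨0, ⟨by simp, 0, by simp, fun i => ?_, ?_⟩, by simpa using by positivity⟩
      · rw [Subsingleton.elim (xs i) 0]; simpa
      · rw [Subsingleton.elim x' 0]; simpa
    · obtain ⟨v, hv⟩ := exists_ne (0 : X)
      obtain ⟨f, hf, -⟩ := exists_dual_vector ℝ v (norm_ne_zero_iff.2 hv)
      obtain ⟨y, hy, -⟩ := hX n xs hxs ε hε x' hx' f hf 1 one_pos
      exact ⟨y, hy, by simpa using by positivity⟩
  · have hpos : 0 < ‖L‖ := norm_pos_iff.2 hL0
    obtain ⟨y, hy, hfy⟩ := hX n xs hxs ε hε x' hx' (‖L‖⁻¹ • L)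
      (by rw [norm_smul, norm_inv, norm_norm, inv_mul_cancel₀ hpos.ne']) t ht
    refine ⟨y, hy, ?_⟩
    have h1 : ‖L‖ * (1 - t) ≤ L y := by
      have := mul_le_mul_of_nonneg_left hfy.le hpos.le
      rwa [smul_apply, smul_eq_mul, mul_inv_cancel_left₀ hpos.ne'] at this
    have h2 : L z ≤ ‖L‖ := (le_abs_self _).trans (L.unit_le_opNorm z hz)
    nlinarith

/-- The state after `k` steps of size `t` of the path starting at `z`: the partial sum `s`
already built, of norm at most `k * t`, and one operator that almost fixes the `xs i` and `x'` and
sends `s` close to `(k * t) • x'`. Fixing `x'` is what makes the next composition possible. Each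
step costs at most `5 * C * t ^ 2` in the value of `q`: `C * t ^ 2` from the slice and
`C * (2 * t) ^ 2` from the remainder. -/
lemma exists_path (hX : WODP X) {n : ℕ} {xs : Fin n → X} (hxs : ∀ i, ‖xs i‖ ≤ 1)
    {x' : X} (hx' : ‖x'‖ ≤ 1) {q : X → ℝ} {C : ℝ} (hC : 0 ≤ C) (hq : QuadraticApprox q C)
    {z : X} (hz : ‖z‖ ≤ 1) {t : ℝ} (ht : 0 < t) (k : ℕ) (hk : k * t ≤ 1) :
    ∀ ε > (0 : ℝ), ∃ (s : X) (T : X →L[ℝ] X), ‖s‖ ≤ k * t ∧ ‖T‖ ≤ 1 ∧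
      (∀ i, ‖T (xs i) - xs i‖ < ε) ∧ ‖T x' - x'‖ < ε ∧ ‖T s - (k * t) • x'‖ < ε ∧
      q z - k * (5 * C * t ^ 2) ≤ q (s + (1 - k * t) • z) := by
  induction k with
  | zero =>
    intro ε hε
    exact ⟨0, ContinuousLinearMap.id ℝ X, by simp, ContinuousLinearMap.norm_id_le,
      by simpa using fun _ => hε, by simpa using hε, by simpa using hε, by simp⟩
  | succ k ih =>
    intro ε hε
    push_cast at hk
    have hkt : 0 ≤ k * t := by positivity
    obtain ⟨s, T, hs, hT, hTx, hTx', hTs, hqs⟩ := ih (by linarith) (ε / 4) (by positivity)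
    set w := s + (1 - k * t) • z with hw
    have hw1 : ‖w‖ ≤ 1 := by
      refine (norm_add_le _ _).trans ?_
      rw [norm_smul, Real.norm_of_nonneg (by linarith)]
      nlinarith
    obtain ⟨L, hL, hLq⟩ := hq w hw1
    obtain ⟨y, ⟨hy, S, hS, hSx, hSy⟩, hLy⟩ := hX.exists_almost_max
      (xs := Fin.cons s (Fin.cons x' xs)) (ε := ε / 4) (x' := x')
      (Fin.cases (by simpa using by linarith) (Fin.cases (by simpa using hx') (by simpa using hxs)))
      (by positivity) hx' L hL ht hz
    have hSs : ‖S s - s‖ < ε / 4 := by simpa using hSx 0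
    have hSx' : ‖S x' - x'‖ < ε / 4 := by simpa using hSx (Fin.succ 0)
    have hSxs : ∀ i, ‖S (xs i) - xs i‖ < ε / 4 := fun i => by
      simpa using hSx (Fin.succ (Fin.succ i))
    have hTle : ∀ v, ‖T v‖ ≤ ‖v‖ := fun v =>
      (T.le_of_opNorm_le hT v).trans (one_mul _).le
    have hcomp : ∀ {a b c : X}, ‖S a - b‖ < ε / 4 → ‖T b - c‖ < ε / 4 →
        ‖T (S a) - c‖ < ε / 2 := by
      intro a b c h1 h2
      have e : T (S a) - c = T (S a - b) + (T b - c) := by rw [map_sub]; abel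
      rw [e]
      linarith [norm_add_le (T (S a - b)) (T b - c), hTle (S a - b)]
    have ht1 : t ≤ 1 := by linarith
    have hnext : s + t • y + (1 - ((k : ℝ) + 1) * t) • z = w + t • (y - z) := by
      rw [hw]; module
    refine ⟨s + t • y, T.comp S, ?_, ?_, fun i => ?_, ?_, ?_, ?_⟩
    · refine (norm_add_le _ _).trans ?_
      rw [norm_smul, Real.norm_of_nonneg ht.le]
      push_cast
      nlinarith
    · exact (T.opNorm_comp_le S).trans (mul_le_one₀ hT (norm_nonneg _) hS)
    · exact (hcomp (hSxs i) (hTx i)).trans (by linarith)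
    · exact (hcomp hSx' hTx').trans (by linarith)
    · have e : (T.comp S) (s + t • y) - (((k + 1 : ℕ) : ℝ) * t) • x'
          = (T (S s) - (k * t) • x') + t • (T (S y) - x') := by
        simp only [ContinuousLinearMap.comp_apply, map_add, map_smul]
        push_cast
        module
      rw [e]
      refine (norm_add_le _ _).trans_lt ?_
      rw [norm_smul, Real.norm_of_nonneg ht.le]
      have h1 := hcomp hSs hTs
      have h2 := hcomp hSy hTx'
      nlinarith [norm_nonneg (T (S y) - x')]
    · have hv1 : ‖w + t • (y - z)‖ ≤ 1 := by
        rw [← hnext]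
        refine (norm_add₃_le).trans ?_
        rw [norm_smul, norm_smul, Real.norm_of_nonneg ht.le, Real.norm_of_nonneg (by linarith)]
        nlinarith
      have h1 := (abs_le.1 (hLq _ hv1)).1
      rw [add_sub_cancel_left, map_smul, map_sub, smul_eq_mul, norm_smul,
        Real.norm_of_nonneg ht.le] at h1
      have h2 : ‖y - z‖ ≤ 2 := (norm_sub_le _ _).trans (by linarith)
      have h3 : C * (t * ‖y - z‖) ^ 2 ≤ C * (t * 2) ^ 2 := by gcongr
      have h4 : t * (-(C * t)) ≤ t * (L y - L z) :=
        mul_le_mul_of_nonneg_left (by linarith) ht.le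
      push_cast
      rw [hnext]
      nlinarith

/-- Values of `q` on the ball are almost reached from below on `OF`: run the path through
`N` steps of size `1 / N`, with total loss `5 * C / N`. -/
lemma QuadraticApprox.exists_mem_OF (hX : WODP X) {n : ℕ} {xs : Fin n → X}
    (hxs : ∀ i, ‖xs i‖ ≤ 1) {x' : X} (hx' : ‖x'‖ ≤ 1) {q : X → ℝ} {C : ℝ}
    (hq : QuadraticApprox q C) {z : X} (hz : ‖z‖ ≤ 1) {ε δ : ℝ} (hε : 0 < ε) (hδ : 0 < δ) :
    ∃ y ∈ OF xs x' ε, q z - δ < q y := by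
  have hC : 0 ≤ C := by
    obtain ⟨L, hL, -⟩ := hq 0 (by simp)
    exact (norm_nonneg _).trans hL
  obtain ⟨N, hN⟩ := exists_nat_gt (5 * C / δ)
  have hN0 : (0 : ℝ) < N := lt_of_le_of_lt (by positivity) hN
  have hNt : (N : ℝ) * (1 / N) = 1 := by field_simp
  obtain ⟨s, T, hs, hT, hTx, -, hTs, hqs⟩ :=
    exists_path hX hxs hx' hC hq hz (t := 1 / N) (by positivity) N hNt.le ε hε
  rw [hNt] at hs hTs hqs
  rw [one_smul] at hTs
  rw [sub_self, zero_smul, add_zero] at hqs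
  refine ⟨s, ⟨hs, T, hT, hTx, hTs⟩, lt_of_lt_of_le ?_ hqs⟩
  have e : (N : ℝ) * (5 * C * (1 / N) ^ 2) = 5 * C / N := by field_simp
  rw [e]
  have : 5 * C / N < δ := by
    rw [div_lt_iff₀ hδ] at hN
    rw [div_lt_iff₀ hN0]
    linarith
  linarith

end

/-- WODP implies polynomial WODP: if `X` has the WODP, then for every
`x₁,…,x_n ∈ B_X`, `ε, δ > 0`, `x' ∈ B_X` and every continuous scalar polynomial `p` with
`sup_{‖z‖≤1} |p z| = 1`, there are `y ∈ OF(x₁,…,x_n; x', ε)` and `ω ∈ {−1, 1}` with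
`ω * p y > 1 - δ`. -/
theorem wodp_implies_polynomial_wodp
    {X : Type*} [NormedAddCommGroup X] [NormedSpace ℝ X] [CompleteSpace X]
    (hWODP : ∀ (n : ℕ) (xs : Fin n → X), (∀ i, ‖xs i‖ ≤ 1) →
      ∀ ε > (0 : ℝ), ∀ (x' : X), ‖x'‖ ≤ 1 →
        ∀ (f : X →L[ℝ] ℝ), ‖f‖ = 1 → ∀ α > (0 : ℝ),
          ∃ x ∈ OF xs x' ε, f x > 1 - α) :
    ∀ (n : ℕ) (xs : Fin n → X), (∀ i, ‖xs i‖ ≤ 1) →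
      ∀ ε > (0 : ℝ), ∀ δ > (0 : ℝ), ∀ (x' : X), ‖x'‖ ≤ 1 →
        ∀ (p : X → ℝ), IsScalarPoly p →
          (⨆ z : {z : X // ‖z‖ ≤ 1}, |p z|) = 1 →
            ∃ y ∈ OF xs x' ε, ∃ ω : ℝ, (ω = 1 ∨ ω = -1) ∧ ω * p y > 1 - δ := by
  intro n xs hxs ε hε δ hδ x' hx' p hp hsup
  obtain ⟨C, hC⟩ := hp.quadraticApprox
  have : Nonempty {z : X // ‖z‖ ≤ 1} := ⟨⟨0, by simp⟩⟩
  obtain ⟨⟨z, hz⟩, hpz⟩ : ∃ z : {z : X // ‖z‖ ≤ 1}, 1 - δ / 2 < |p z| :=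
    exists_lt_of_lt_ciSup (by rw [hsup]; linarith)
  rcases abs_choice (p z) with h | h
  · obtain ⟨y, hy, hpy⟩ := hC.exists_mem_OF hWODP hxs hx' hz hε (half_pos hδ)
    exact ⟨y, hy, 1, Or.inl rfl, by simp only [h] at hpz; linarith⟩
  · obtain ⟨y, hy, hpy⟩ := hC.neg.exists_mem_OF hWODP hxs hx' hz hε (half_pos hδ)
    exact ⟨y, hy, -1, Or.inr rfl, by simp only [h] at hpz; linarith⟩
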